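/- For n ≥ 0, let ∂C_n^d denote the union of all n-boxes L_n^{j_1} × ⋯ × L_n^{j_d} such that j_i = 0 or j_i = h_n − 1 for some i ∈ {1,…,d}. Then, for all n large enough so that σ(C_n^d) > 0, the ratio δ(n) := σ(∂C_n^d)/σ(C_n^d) is defined, and δ(n) → 0 as n → ∞. -/

import Mathlib

/-!
The proof uses only the invariance of `σ` and the fact that it is carried by `X_∞^d`.

That `σ(C_n^d)` is eventually positive holds because the sets `C_n^d` increase to `X^d`. For the
limit, fix an integer `K` and consider `F = 1_{C_n^d} - K 1_{∂C_n^d}` (`NFC.edgeFun`). It suffices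
to prove `K σ(∂C_n^d) ≤ σ(C_n^d)` for all large `n`.

Say that `F` has long averages at least `ρ` in tower `m`, with threshold `τ`, if its average is at
least `ρ` along every orbit segment of length at least `τ` during which each coordinate stays inside
one occurrence of tower `m` (`NFC.LongAvg`). For `m = n` this holds with `ρ = 1/2` and `τ = 4 K`,
since during such a segment the edge can be met only at the two extreme times
(`NFC.longAvg_base`). The key step (`NFC.LongAvg.step`) passes from `m` to a higher tower `m'` and
halves `ρ`: a segment inside tower `m'` is cut each time a coordinate enters an occurrence of tower
`m`. There are few cuts because such entrances are `h_m` apart in each coordinate, the time spent in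
the spacers is short because the gaps between occurrences of tower `m` are short, and `F` is
nonnegative there. Starting at `n`, the step is applied to reach the first `n_ℓ ≥ n`, and then from
each `n_p` to `n_{p+1}` with threshold `h_{n_p}` (`NFC.exists_longAvg`). The spacers inserted at
step `n_p` are negligible compared with `h_{n_p}` because `k(p) → ∞`, and the loss of a factor
`2^{-p}` in `ρ` is harmless since `h_{n_{p-1}} / h_{n_p} ≤ 9^{-p}`.

Integrating `∑_{s < τ} F ∘ T^s ≥ 0` with `τ = h_{n_{p-1}}` over the points starting a segment of
length `τ` in tower `n_p` gives `K σ(∂C_n^d ∩ I_p) ≤ σ(C_n^d)`, where `I_p` is the set of points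
all of whose coordinates are at distance at least `τ` from both ends of tower `n_p`
(`NFC.mul_measure_edge_le`). A point of `X_∞^d` belongs to `I_p` for all large `p`
(`NFCX.exists_margin`), so letting `p → ∞` removes the restriction to `I_p`.
-/

open MeasureTheory Set Filter Topology
open scoped ENNReal
open scoped Classical

noncomputable section

/-! ## The nearly finite Chacon transformation: symbolic model -/

/-- The alphabet `{*} ∪ ℕ` is modelled by `Option ℕ`, `none` playing the role of `*`. -/
instance optionNatTop : TopologicalSpace (Option ℕ) := ⊥

/-- The data of the two sequences `(n_ℓ)` and `(ℓ_k)` used in the construction of the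
nearly finite Chacon transformation, together with the growth conditions imposed on them. -/
structure NFCseq where
  nseq : ℕ → ℕ
  lseq : ℕ → ℕ
  nseq_zero : nseq 0 = 0
  lseq_zero : lseq 0 = 1
  lseq_strictMono : StrictMono lseq
  nseq_growth : ∀ ℓ : ℕ, 1 ≤ ℓ → nseq (ℓ - 1) + 2 * ℓ < nseq ℓ
  lseq_growth : ∀ k : ℕ, (2 : ℝ) ≤ (1 + ((7 : ℝ) ^ k)⁻¹) ^ (lseq (k + 1) - lseq k)

namespace NFCseq

/-- `k(ℓ)`: the unique `k` with `ℓ_k ≤ ℓ < ℓ_{k+1}`. -/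
def kOf (P : NFCseq) (ℓ : ℕ) : ℕ := sSup {k | P.lseq k ≤ ℓ}

/-- The heights `h_n` of the towers. -/
def hgt (P : NFCseq) : ℕ → ℕ
  | 0 => 1
  | n + 1 =>
    3 * P.hgt n +
      3 * (if hn : ∃ ℓ, 1 ≤ ℓ ∧ P.nseq ℓ = n then P.hgt (n - P.kOf (Nat.find hn)) else 0) + 1
termination_by n => n
decreasing_by all_goals omega

theorem hgt_pos (P : NFCseq) (n : ℕ) : 0 < P.hgt n := by
  cases n with
  | zero => simp [hgt]
  | succ n => rw [hgt]; omega

/-- The number of spacers put above the first subcolumn at step `n+1`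
(`h_{n-k(ℓ)}` if `n = n_ℓ`, and `0` otherwise). -/
def spa (P : NFCseq) (n : ℕ) : ℕ :=
  if hn : ∃ ℓ, 1 ≤ ℓ ∧ P.nseq ℓ = n then P.hgt (n - P.kOf (Nat.find hn)) else 0

/-- The map `p_n` sending the index of a level of tower `n+1` to the index of the level of
tower `n` containing it (`none` if that level lies outside tower `n`). -/
def pmap (P : NFCseq) (n j : ℕ) : Option ℕ :=
  if j < P.hgt n then some j
  else if j < P.hgt n + P.spa n then none
  else if j < 2 * P.hgt n + P.spa n then some (j - (P.hgt n + P.spa n))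
  else if j < 2 * P.hgt n + 2 * P.spa n + 1 then none
  else if j < 3 * P.hgt n + 2 * P.spa n + 1 then some (j - (2 * P.hgt n + 2 * P.spa n + 1))
  else none

/-- The defining property of points of the space `X`. -/
def Xspec (P : NFCseq) (x : ℕ → Option ℕ) : Prop :=
  (∀ n, x n = (x (n + 1)).bind (P.pmap n)) ∧ ∃ n, x n ≠ none

/-- The space `X` of the symbolic model, with its product (subspace) topology. -/
abbrev Xpt (P : NFCseq) : Type := {x : ℕ → Option ℕ // P.Xspec x}

instance (P : NFCseq) : MeasurableSpace P.Xpt := borel _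

/-- `L_n^j`, the `j`-th level of tower `n`. -/
def level (P : NFCseq) (n j : ℕ) : Set P.Xpt := {x | x.1 n = some j}

/-- `C_n`, the union of all levels of tower `n`. -/
def tower (P : NFCseq) (n : ℕ) : Set P.Xpt := {x | x.1 n ≠ none}

theorem pmap_zero (P : NFCseq) (n : ℕ) : P.pmap n 0 = some 0 := by
  unfold pmap
  simp [P.hgt_pos n]

/-- The point `𝟎 = (0,0,…)`. -/
def zeroPt (P : NFCseq) : P.Xpt :=
  ⟨fun _ => some 0, fun n => by
    show some 0 = (some 0).bind (P.pmap n)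
    simp [P.pmap_zero n], 0, by simp⟩

/-- `t_n(x) ∈ {1,2,3}`: the subcolumn of tower `n` to which `x` belongs
(junk value `0` if `x` is not in tower `n+1`). -/
def tcol (P : NFCseq) (n : ℕ) (x : P.Xpt) : ℕ :=
  match x.1 (n + 1) with
  | none => 0
  | some j =>
    if j < P.hgt n + P.spa n then 1
    else if j < 2 * P.hgt n + 2 * P.spa n + 1 then 2
    else 3

/-- The index (from `0` to `3^(m-n) - 1`, ordered from bottom to top of tower `m`) of the
occurrence of tower `n` inside tower `m` to which `x` belongs. -/
def occIdx (P : NFCseq) (n m : ℕ) (x : P.Xpt) : ℕ :=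
  ∑ r ∈ Finset.Ico n m, (P.tcol r x - 1) * 3 ^ (r - n)

/-- `x` belongs to one of the first hundred occurrences of tower `n` inside tower `m`. -/
def inFirstHundred (P : NFCseq) (n m : ℕ) (x : P.Xpt) : Prop := P.occIdx n m x < 100

/-- `x` belongs to one of the last hundred occurrences of tower `n` inside tower `m`. -/
def inLastHundred (P : NFCseq) (n m : ℕ) (x : P.Xpt) : Prop :=
  3 ^ (m - n) ≤ P.occIdx n m x + 100

end NFCseq

/-- The nearly finite Chacon transformation `T` together with its invariant measure `μ`. -/
structure NFC extends NFCseq where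
  T : toNFCseq.Xpt → toNFCseq.Xpt
  μ : Measure toNFCseq.Xpt
  T_inj : Function.Injective T
  T_range : Set.range T = {toNFCseq.zeroPt}ᶜ
  T_up : ∀ x : toNFCseq.Xpt, ∃ N : ℕ, ∀ n, N ≤ n →
    ∃ j : ℕ, x.1 n = some j ∧ (T x).1 n = some (j + 1)
  T_meas : Measurable T
  μ_level : ∀ n j : ℕ, j < toNFCseq.hgt n →
    μ (toNFCseq.level n j) = (3 : ℝ≥0∞)⁻¹ ^ n
  μ_pres : MeasurePreserving T μ μ
  μ_sfin : SigmaFinite μ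

namespace NFC

/-- `X^d`. -/
abbrev Xd (S : NFC) (d : ℕ) : Type := Fin d → S.toNFCseq.Xpt

/-- The Cartesian power `T^{×d}`. -/
def Td (S : NFC) (d : ℕ) : S.Xd d → S.Xd d := fun y i => S.T (y i)

/-- `C_n^d`. -/
def towerD (S : NFC) (d n : ℕ) : Set (S.Xd d) := {y | ∀ i, y i ∈ S.toNFCseq.tower n}

/-- `B` is an `n`-box. -/
def IsNBox (S : NFC) (d n : ℕ) (B : Set (S.Xd d)) : Prop :=
  ∃ v : Fin d → ℕ, (∀ i, v i < S.toNFCseq.hgt n) ∧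
    B = {y : S.Xd d | ∀ i, y i ∈ S.toNFCseq.level n (v i)}

/-- A measure on `X^d` is Radon iff it is finite on each `C_n^d`. -/
def IsRadon (S : NFC) (d : ℕ) (σ : Measure (S.Xd d)) : Prop :=
  ∀ n, σ (S.towerD d n) < ⊤

/-- `σ` is `T^{×d}`-invariant. -/
def InvariantD (S : NFC) (d : ℕ) (σ : Measure (S.Xd d)) : Prop :=
  ∀ A : Set (S.Xd d), MeasurableSet A → σ ((S.Td d) ⁻¹' A) = σ A

/-- `T^{-e} A`, the preimage of `A` under `T^e` for `e ∈ ℤ` (image for negative `e`). -/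
def preT (S : NFC) : ℤ → Set S.toNFCseq.Xpt → Set S.toNFCseq.Xpt
  | Int.ofNat k, A => S.T^[k] ⁻¹' A
  | Int.negSucc k, A => S.T^[k + 1] '' A

/-- `σ` is a graph measure arising from powers of `T` on `X^ι`:
`σ(∏ᵢ Aᵢ) = α · μ(⋂ᵢ T^{-eᵢ} Aᵢ)`. -/
def IsGraphMeasure (S : NFC) {ι : Type} (σ : Measure (ι → S.toNFCseq.Xpt)) : Prop :=
  ∃ α : ℝ≥0∞, 0 < α ∧ α ≠ ⊤ ∧ ∃ e : ι → ℤ,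
    ∀ A : ι → Set S.toNFCseq.Xpt, (∀ i, MeasurableSet (A i)) →
      σ (Set.univ.pi A) = α * S.μ (⋂ i, S.preT (e i) (A i))

/-- `σ = σ^{D_1} ⊗ ⋯ ⊗ σ^{D_r}` for a partition `D_1, …, D_r` of `{1,…,d}` where each
`σ^{D_j}` is a graph measure on `X^{D_j}` arising from powers of `T`. -/
def IsProductOfGraphMeasures (S : NFC) (d : ℕ) (σ : Measure (S.Xd d)) : Prop :=
  ∃ (r : ℕ) (D : Fin r → Finset (Fin d)),
    (∀ j, (D j).Nonempty) ∧
    (∀ j j', j ≠ j' → Disjoint (D j) (D j')) ∧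
    (∀ i : Fin d, ∃ j, i ∈ D j) ∧
    ∃ σD : ∀ j : Fin r, Measure ({i // i ∈ D j} → S.toNFCseq.Xpt),
      (∀ j, S.IsGraphMeasure (σD j)) ∧
      ∀ A : Fin d → Set S.toNFCseq.Xpt, (∀ i, MeasurableSet (A i)) →
        σ (Set.univ.pi A) =
          ∏ j : Fin r, σD j (Set.univ.pi fun i : {i // i ∈ D j} => A i.1)

end NFC


/-- `(T)^j W` for `j ∈ ℤ`: forward images for `j ≥ 0`, preimages for `j < 0`. -/
def iterZ {α : Type*} (f : α → α) : ℤ → Set α → Set α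
  | Int.ofNat k, A => f^[k] '' A
  | Int.negSucc k, A => f^[k + 1] ⁻¹' A

namespace NFC

/-- `σ` is totally dissipative: there is a wandering set `W` whose `ℤ`-orbit covers
`X^d` up to a `σ`-null set. -/
def TotallyDissipative (S : NFC) (d : ℕ) (σ : Measure (S.Xd d)) : Prop :=
  ∃ W : Set (S.Xd d), MeasurableSet W ∧
    (∀ j j' : ℤ, j ≠ j' → Disjoint (iterZ (S.Td d) j W) (iterZ (S.Td d) j' W)) ∧
    σ (⋃ j : ℤ, iterZ (S.Td d) j W)ᶜ = 0

/-- The ring `𝓡` of finite unions of `n`-boxes. -/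
def BoxRing (S : NFC) (d : ℕ) : Set (Set (S.Xd d)) :=
  {B | ∃ n : ℕ, ∃ 𝔅 : Finset (Set (S.Xd d)), (∀ b ∈ 𝔅, S.IsNBox d n b) ∧ B = ⋃₀ ↑𝔅}

/-- Convergence of a sequence of Radon measures on `X^d`. -/
def RTendsto (S : NFC) (d : ℕ) (σk : ℕ → Measure (S.Xd d)) (σ : Measure (S.Xd d)) : Prop :=
  ∀ n : ℕ, 0 < σ (S.towerD d n) →
    (∀ᶠ k in atTop, 0 < σk k (S.towerD d n)) ∧
    ∀ B : Set (S.Xd d), S.IsNBox d n B →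
      Tendsto (fun k => σk k B / σk k (S.towerD d n)) atTop
        (𝓝 (σ B / σ (S.towerD d n)))

/-- The edge `∂C_n^d` of `C_n^d`. -/
def edgeD (S : NFC) (d n : ℕ) : Set (S.Xd d) :=
  {y | y ∈ S.towerD d n ∧ ∃ i, y i ∈ S.toNFCseq.level n 0 ∨
    y i ∈ S.toNFCseq.level n (S.toNFCseq.hgt n - 1)}

/-- `Ω_m`: the union of all `m`-boxes `L_m^{j_1} × ⋯ × L_m^{j_d}` with `j_i ≠ 0` for all `i`. -/
def OmegaD (S : NFC) (d m : ℕ) : Set (S.Xd d) :=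
  {y | ∀ i, ∃ j : ℕ, j ≠ 0 ∧ j < S.toNFCseq.hgt m ∧ y i ∈ S.toNFCseq.level m j}

/-- A twisting transformation on `X^d`: it applies `T` to the coordinates in a nonempty
proper subset `G_1 ⊆ {1,…,d}` and the identity to the others. -/
def IsTwist (S : NFC) (d : ℕ) (Sw : S.Xd d → S.Xd d) : Prop :=
  ∃ G : Fin d → Bool, (∃ i, G i = true) ∧ (∃ i, G i = false) ∧
    ∀ (y : S.Xd d) (i : Fin d), Sw y i = if G i then S.T (y i) else y i

/-- The empirical measure `γ_J = ∑_{j ∈ J} δ_{(T^{×d})^j x}` along a two-sided orbit `o`. -/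
def emp (S : NFC) (d : ℕ) (o : ℤ → S.Xd d) (J : Finset ℤ) : Measure (S.Xd d) :=
  ∑ j ∈ J, Measure.dirac (o j)

end NFC

/-- `J` is a (nonempty finite) interval of `ℤ`. -/
def IsIntervalZ (J : Finset ℤ) : Prop := ∃ a b : ℤ, a ≤ b ∧ J = Finset.Icc a b

namespace NFC

/-- `J` is an `n`-crossing for the orbit `o` of a point of `X^d`: a maximal interval on which
the orbit stays in `C_n^d` with all the `t_n(T^j x_i)` constant. -/
def IsCrossing (S : NFC) (d : ℕ) (o : ℤ → S.Xd d) (n : ℕ) (J : Finset ℤ) : Prop :=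
  IsIntervalZ J ∧
  (∀ j ∈ J, o j ∈ S.towerD d n) ∧
  (∀ i : Fin d, ∀ j ∈ J, ∀ j' ∈ J, S.toNFCseq.tcol n (o j i) = S.toNFCseq.tcol n (o j' i)) ∧
  ∀ J' : Finset ℤ, J ⊆ J' → IsIntervalZ J' →
    (∀ j ∈ J', o j ∈ S.towerD d n) →
    (∀ i : Fin d, ∀ j ∈ J', ∀ j' ∈ J', S.toNFCseq.tcol n (o j i) = S.toNFCseq.tcol n (o j' i)) →
    J' = J

/-- An `n`-crossing is synchronized if `t_n(T^j x_1) = ⋯ = t_n(T^j x_d)` on it. -/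
def IsSync (S : NFC) (d : ℕ) (o : ℤ → S.Xd d) (n : ℕ) (J : Finset ℤ) : Prop :=
  ∀ j ∈ J, ∀ i i' : Fin d, S.toNFCseq.tcol n (o j i) = S.toNFCseq.tcol n (o j i')

end NFC

/-- The interval `I_n` of length `h_n` centered at `0`. -/
def Imid (P : NFCseq) (n : ℕ) : Finset ℤ :=
  Finset.Icc (-((P.hgt n / 2 : ℕ) : ℤ)) (-((P.hgt n / 2 : ℕ) : ℤ) + P.hgt n - 1)

namespace NFC

/-- A substantial `n`-crossing: an `n`-crossing whose intersection with `I_n` has at least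
`η·h_n` elements. -/
def IsSubstantial (S : NFC) (d : ℕ) (o : ℤ → S.Xd d) (η : ℝ) (n : ℕ) (J : Finset ℤ) : Prop :=
  S.IsCrossing d o n J ∧ η * S.toNFCseq.hgt n ≤ ((J ∩ Imid S.toNFCseq n).card : ℝ)

/-- `x_i` climbs into tower `n` along the interval `I`. -/
def Climbs (S : NFC) (d : ℕ) (o : ℤ → S.Xd d) (i : Fin d) (n : ℕ) (I : Finset ℤ) : Prop :=
  (∀ j ∈ I, (o j) i ∈ S.toNFCseq.tower n) ∧
  ¬ ∃ j : ℤ, j ∈ I ∧ j + 1 ∈ I ∧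
      (o j) i ∈ S.toNFCseq.level n (S.toNFCseq.hgt n - 1) ∧
      (o (j + 1)) i ∈ S.toNFCseq.level n 0

end NFC

/-- The nearly finite Chacon system together with the conull set `X_∞` and the function
`x ↦ ℓ(x)` of Lemma 2.3. -/
structure NFCX extends NFC where
  Xinf : Set toNFCseq.Xpt
  ellx : toNFCseq.Xpt → ℕ
  Xinf_conull : μ Xinfᶜ = 0
  Xinf_spec : ∀ x ∈ Xinf, ∀ ℓ : ℕ, ellx x ≤ ℓ → ∀ n : ℕ,
    nseq (ℓ - 1) ≤ n → n + ℓ ≤ nseq ℓ →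
      x ∈ toNFCseq.tower n ∧ ¬ toNFCseq.inFirstHundred n (nseq ℓ) x ∧
        ¬ toNFCseq.inLastHundred n (nseq ℓ) x

namespace NFCX

/-- `o` is the two-sided orbit of a `σ`-typical point `x = o 0` (satisfying
conditions (1), (2) and (3) of Section 3.4 of the paper). -/
def IsTypicalOrbit (S : NFCX) (d : ℕ) (σ : Measure (S.toNFC.Xd d))
    (o : ℤ → S.toNFC.Xd d) : Prop :=
  (∀ j : ℤ, S.toNFC.Td d (o j) = o (j + 1)) ∧
  (∀ j : ℤ, ∀ n : ℕ, 0 < σ (S.toNFC.towerD d n) →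
    ∀ B : Set (S.toNFC.Xd d), S.toNFC.IsNBox d n B →
    ∀ a b : ℕ → ℤ, (∀ k, a k ≤ 0) → (∀ k, 0 ≤ b k) →
      Tendsto (fun k => b k - a k) atTop atTop →
      Tendsto (fun k =>
          (((Finset.Icc (a k) (b k)).filter (fun j' => o (j + j') ∈ B)).card : ℝ) /
            (((Finset.Icc (a k) (b k)).filter
              (fun j' => o (j + j') ∈ S.toNFC.towerD d n)).card : ℝ))
        atTop (𝓝 ((σ B).toReal / (σ (S.toNFC.towerD d n)).toReal))) ∧
  (∀ n : ℕ, ∀ B : Set (S.toNFC.Xd d), S.toNFC.IsNBox d n B → o 0 ∈ B → 0 < σ B) ∧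
  (∀ i : Fin d, (o 0) i ∈ S.Xinf)

end NFCX

/-! ## Subsets of `ℤ` of order `ℓ` inside an interval -/

/-- A piece of `F ∩ I`: a maximal interval included in `F ∩ I`. -/
def IsPieceZ (F : Set ℤ) (I : Finset ℤ) (J : Finset ℤ) : Prop :=
  IsIntervalZ J ∧ (↑J : Set ℤ) ⊆ F ∩ ↑I ∧
    ∀ J' : Finset ℤ, IsIntervalZ J' → (↑J' : Set ℤ) ⊆ F ∩ ↑I → J ⊆ J' → J' = J

/-- A hole of `F ∩ I`: a maximal interval included in `I \ F`. -/
def IsHoleZ (F : Set ℤ) (I : Finset ℤ) (J : Finset ℤ) : Prop :=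
  IsIntervalZ J ∧ (↑J : Set ℤ) ⊆ (↑I : Set ℤ) \ F ∧
    ∀ J' : Finset ℤ, IsIntervalZ J' → (↑J' : Set ℤ) ⊆ (↑I : Set ℤ) \ F → J ⊆ J' → J' = J

/-- Each hole of `F ∩ I` has size at most `s`. -/
def HolesSmall (F : Set ℤ) (I : Finset ℤ) (s : ℕ) : Prop :=
  ∀ H : Finset ℤ, IsHoleZ F I H → H.card ≤ s

/-- Two consecutive holes of `F ∩ I` are always separated by a piece of size at least `c`. -/
def HolesSeparated (F : Set ℤ) (I : Finset ℤ) (c : ℕ) : Prop :=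
  ∀ H₁ H₂ : Finset ℤ, IsHoleZ F I H₁ → IsHoleZ F I H₂ →
    (∀ a ∈ H₁, ∀ b ∈ H₂, a < b) →
    ∃ J : Finset ℤ, IsPieceZ F I J ∧ c ≤ J.card ∧ ∀ a ∈ H₁, ∀ b ∈ H₂, ∀ x ∈ J, a < x ∧ x < b

/-- `F` is of order `ℓ ≥ 1` inside the interval `I`, with respect to the sequences `c`, `s`. -/
def IsOrder (c s : ℕ → ℕ) : ℕ → Set ℤ → Finset ℤ → Prop
  | 0, _, _ => False
  | 1, F, I => HolesSmall F I (s 1) ∧ HolesSeparated F I (c 1)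
  | (ℓ + 2), F, I => ∃ F' : Set ℤ, F ⊆ F' ∧ HolesSmall F' I (s (ℓ + 2)) ∧
      HolesSeparated F' I (c (ℓ + 2)) ∧
      ∀ J : Finset ℤ, IsPieceZ F' I J → IsOrder c s (ℓ + 1) F J

/-- `p_1`: the smallest integer such that `3^{p_1} > 2d+1` and `p_1 > d`. -/
def pOne (d : ℕ) : ℕ := sInf {p : ℕ | 2 * d + 1 < 3 ^ p ∧ d < p}

/-- `p_2`: the smallest integer such that `1/3^{p_2} < η/3`. -/
def pTwo (η : ℝ) : ℕ := sInf {p : ℕ | ((3 : ℝ) ^ p)⁻¹ < η / 3}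

namespace NFCseq

/-! ### Heights and the maps between consecutive towers -/

theorem hgt_succ (P : NFCseq) (n : ℕ) : P.hgt (n + 1) = 3 * P.hgt n + 3 * P.spa n + 1 := by
  rw [hgt]; rfl

theorem hgt_lt_succ (P : NFCseq) (n : ℕ) : P.hgt n < P.hgt (n + 1) := by
  rw [hgt_succ]; omega

theorem hgt_strictMono (P : NFCseq) : StrictMono P.hgt :=
  strictMono_nat_of_lt_succ P.hgt_lt_succ

theorem three_pow_mul_hgt_le (P : NFCseq) (n k : ℕ) : 3 ^ k * P.hgt n ≤ P.hgt (n + k) := by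
  induction k with
  | zero => simp
  | succ k ih =>
    rw [← add_assoc, hgt_succ, pow_succ]
    nlinarith

theorem nseq_lt_succ (P : NFCseq) (l : ℕ) : P.nseq l + 2 * (l + 1) < P.nseq (l + 1) := by
  simpa using P.nseq_growth (l + 1) (by omega)

theorem nseq_strictMono (P : NFCseq) : StrictMono P.nseq :=
  strictMono_nat_of_lt_succ fun l => by have := P.nseq_lt_succ l; omega

theorem le_nseq (P : NFCseq) (l : ℕ) : l ≤ P.nseq l := P.nseq_strictMono.le_apply

theorem spa_nseq (P : NFCseq) {l : ℕ} (hl : 1 ≤ l) :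
    P.spa (P.nseq l) = P.hgt (P.nseq l - P.kOf l) := by
  have hn : ∃ l', 1 ≤ l' ∧ P.nseq l' = P.nseq l := ⟨l, hl, rfl⟩
  have h : Nat.find hn = l := P.nseq_strictMono.injective (Nat.find_spec hn).2
  unfold spa
  rw [dif_pos hn, h]

theorem spa_eq_zero (P : NFCseq) {l r : ℕ} (h1 : P.nseq l < r) (h2 : r < P.nseq (l + 1)) :
    P.spa r = 0 := by
  unfold spa
  rw [dif_neg]
  rintro ⟨l', -, rfl⟩
  have a := P.nseq_strictMono.lt_iff_lt.1 h1
  have b := P.nseq_strictMono.lt_iff_lt.1 h2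
  omega

theorem kOf_bddAbove (P : NFCseq) (l : ℕ) : BddAbove {k | P.lseq k ≤ l} :=
  ⟨l, fun _ hk => P.lseq_strictMono.le_apply.trans hk⟩

theorem le_kOf (P : NFCseq) {k l : ℕ} (h : P.lseq k ≤ l) : k ≤ P.kOf l :=
  le_csSup (P.kOf_bddAbove l) h

theorem kOf_le (P : NFCseq) (l : ℕ) : P.kOf l ≤ l :=
  csSup_le' fun _ hk => P.lseq_strictMono.le_apply.trans hk

/-- The number of spacers added at step `n_ℓ` is negligible compared with `h_{n_ℓ}`, because
`k(ℓ) → ∞`. -/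
theorem eventually_spa_small (P : NFCseq) (c : ℕ) :
    ∃ l₀, ∀ l, l₀ ≤ l → c * (P.spa (P.nseq l) + 1) ≤ P.hgt (P.nseq l) := by
  refine ⟨P.lseq (2 * c) + 1, fun l hl => ?_⟩
  have hk : 2 * c ≤ P.kOf l := P.le_kOf (by omega)
  have hk2 : P.kOf l ≤ P.nseq l := (P.kOf_le l).trans (P.le_nseq l)
  rw [P.spa_nseq (by omega)]
  have h := P.three_pow_mul_hgt_le (P.nseq l - P.kOf l) (P.kOf l)
  rw [Nat.sub_add_cancel hk2] at h
  have h3 : 2 * c ≤ 3 ^ P.kOf l :=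
    hk.trans (Nat.lt_pow_self (by norm_num)).le
  have hp := P.hgt_pos (P.nseq l - P.kOf l)
  nlinarith

theorem pmap_lt (P : NFCseq) {n j q : ℕ} (h : P.pmap n j = some q) : q < P.hgt n := by
  unfold pmap at h
  split_ifs at h <;> simp at h <;> omega

/-- If level `j` of tower `n+1` lies in level `q` of tower `n`, it is at least as far from the
bottom and from the top of its tower. -/
theorem pmap_margin (P : NFCseq) {n j q : ℕ} (h : P.pmap n j = some q) :
    q ≤ j ∧ j + P.hgt n ≤ q + P.hgt (n + 1) := by
  rw [hgt_succ]
  unfold pmap at h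
  split_ifs at h <;> simp at h <;> omega

theorem pmap_succ (P : NFCseq) {n j q : ℕ} (h : P.pmap n j = some q) (hq : q + 1 < P.hgt n) :
    P.pmap n (j + 1) = some (q + 1) := by
  unfold pmap at h ⊢
  split_ifs at h <;> simp at h <;> split_ifs <;> first | omega | (rw [Option.some.injEq]; omega)

theorem pmap_pred (P : NFCseq) {n j q : ℕ} (h : P.pmap n j = some (q + 1)) :
    ∃ j', j = j' + 1 ∧ P.pmap n j' = some q := by
  obtain ⟨j', rfl⟩ : ∃ j', j = j' + 1 :=
    Nat.exists_eq_succ_of_ne_zero (by rintro rfl; simp [pmap_zero] at h)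
  refine ⟨j', rfl, ?_⟩
  unfold pmap at h ⊢
  split_ifs at h <;> simp at h <;> split_ifs <;> first | omega | (rw [Option.some.injEq]; omega)

variable {P : NFCseq}

theorem coord_eq (x : P.Xpt) (n : ℕ) : x.1 n = (x.1 (n + 1)).bind (P.pmap n) := x.2.1 n

theorem coord_succ (x : P.Xpt) {n q : ℕ} (h : x.1 n = some q) :
    ∃ j, x.1 (n + 1) = some j ∧ P.pmap n j = some q := by
  rw [coord_eq] at h
  exact Option.bind_eq_some_iff.1 h

theorem coord_pred (x : P.Xpt) {n j : ℕ} (h : x.1 (n + 1) = some j) : x.1 n = P.pmap n j := by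
  rw [coord_eq, h]; rfl

theorem coord_lt (x : P.Xpt) {n q : ℕ} (h : x.1 n = some q) : q < P.hgt n := by
  obtain ⟨j, -, hj⟩ := coord_succ x h
  exact P.pmap_lt hj

theorem tower_mono (x : P.Xpt) {n m : ℕ} (hnm : n ≤ m) (h : x.1 n ≠ none) : x.1 m ≠ none := by
  induction m, hnm using Nat.le_induction with
  | base => exact h
  | succ m _ ih =>
    intro h0
    exact ih (by rw [coord_eq, h0]; rfl)

theorem coord_zero_of_le (x : P.Xpt) {n m : ℕ} (hnm : n ≤ m) (h : x.1 m = some 0) :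
    x.1 n = some 0 := by
  induction m, hnm using Nat.le_induction with
  | base => exact h
  | succ m _ ih => exact ih (by rw [coord_pred x h, pmap_zero])

theorem coord_margin (x : P.Xpt) {n m q j : ℕ} (hnm : n ≤ m) (hq : x.1 n = some q)
    (hj : x.1 m = some j) : q ≤ j ∧ j + P.hgt n ≤ q + P.hgt m := by
  induction m, hnm using Nat.le_induction generalizing j with
  | base => rw [hq] at hj; cases hj; simp
  | succ m hm ih =>
    obtain ⟨i, hi⟩ := Option.ne_none_iff_exists'.1 (tower_mono x hm (by simp [hq]))
    have h1 := ih hi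
    have h2 := P.pmap_margin ((coord_pred x hj).symm.trans hi)
    omega

theorem measurableSet_coord (n : ℕ) (U : Set (Option ℕ)) :
    MeasurableSet {x : P.Xpt | x.1 n ∈ U} := by
  have : BorelSpace P.Xpt := ⟨rfl⟩
  have : DiscreteTopology (Option ℕ) := ⟨rfl⟩
  have hc : Continuous fun x : P.Xpt => x.1 n := (continuous_apply n).comp continuous_subtype_val
  exact ((isOpen_discrete U).preimage hc).measurableSet

/-- A point of tower `n` outside the first hundred and the last hundred occurrences of tower `n`
inside tower `m` is at distance at least `h_n` from both ends of tower `m`. -/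
theorem margin_of_occIdx (x : P.Xpt) {n m : ℕ} (hnm : n ≤ m) (hx : x ∈ P.tower n)
    (h1 : ¬ P.inFirstHundred n m x) (h2 : ¬ P.inLastHundred n m x) :
    ∃ j, x.1 m = some j ∧ P.hgt n ≤ j ∧ j + P.hgt n ≤ P.hgt m := by
  have hx' : x.1 n ≠ none := hx
  obtain ⟨j, hj⟩ := Option.ne_none_iff_exists'.1 (tower_mono x hnm hx')
  refine ⟨j, hj, ?_, ?_⟩
  · obtain ⟨r, hr, hne⟩ : ∃ r ∈ Finset.Ico n m, (P.tcol r x - 1) * 3 ^ (r - n) ≠ 0 := by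
      apply Finset.exists_ne_zero_of_sum_ne_zero
      unfold inFirstHundred occIdx at h1
      omega
    rw [Finset.mem_Ico] at hr
    obtain ⟨i, hi⟩ := Option.ne_none_iff_exists'.1 (tower_mono x (m := r + 1) (by omega) hx')
    have hm := (coord_margin x (n := r + 1) (by omega) hi hj).1
    have hh := P.hgt_strictMono.monotone hr.1
    have ht : P.tcol r x - 1 ≠ 0 := fun h => hne (by rw [h, zero_mul])
    simp only [tcol, hi] at ht
    split_ifs at ht <;> omega
  · obtain ⟨r, hr, hlt⟩ : ∃ r ∈ Finset.Ico n m, P.tcol r x - 1 < 2 := by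
      by_contra! hcon
      apply h2
      unfold inLastHundred occIdx
      have hs : ∑ r ∈ Finset.Ico n m, 2 * 3 ^ (r - n) ≤
          ∑ r ∈ Finset.Ico n m, (P.tcol r x - 1) * 3 ^ (r - n) :=
        Finset.sum_le_sum fun r hr => Nat.mul_le_mul_right _ (hcon r hr)
      have hg : ∑ r ∈ Finset.Ico n m, 2 * 3 ^ (r - n) + 1 = 3 ^ (m - n) := by
        rw [Finset.sum_Ico_eq_sum_range]
        simp only [Nat.add_sub_cancel_left]
        induction m - n with
        | zero => simp
        | succ k ih => rw [Finset.sum_range_succ, pow_succ]; omega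
      omega
    rw [Finset.mem_Ico] at hr
    obtain ⟨i, hi⟩ := Option.ne_none_iff_exists'.1 (tower_mono x (m := r + 1) (by omega) hx')
    have hm := (coord_margin x (n := r + 1) (by omega) hi hj).2
    have hh := P.hgt_strictMono.monotone hr.1
    have hs := P.hgt_succ r
    simp only [tcol, hi] at hlt
    split_ifs at hlt <;> omega

end NFCseq

namespace NFC

variable {S : NFC}

/-! ### The action of `T` on the levels -/

theorem coord_T (x : S.Xpt) {n q : ℕ} (h : x.1 n = some q) (hq : q + 1 < S.hgt n) :
    (S.T x).1 n = some (q + 1) := by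
  obtain ⟨N, hN⟩ := S.T_up x
  rcases le_total N n with hn | hn
  · obtain ⟨j, hj, hj'⟩ := hN n hn
    rw [h] at hj; cases hj; exact hj'
  induction hn using Nat.decreasingInduction generalizing q with
  | self =>
    obtain ⟨j, hj, hj'⟩ := hN N le_rfl
    rw [h] at hj; cases hj; exact hj'
  | of_succ n hn ih =>
    obtain ⟨j, hj, hjq⟩ := NFCseq.coord_succ x h
    have hs := S.pmap_succ hjq hq
    have hm := S.pmap_margin hjq
    rw [NFCseq.coord_pred _ (ih hj (by omega)), hs]

theorem coord_of_T (x : S.Xpt) {n q : ℕ} (h : (S.T x).1 n = some (q + 1)) :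
    x.1 n = some q := by
  obtain ⟨N, hN⟩ := S.T_up x
  rcases le_total N n with hn | hn
  · obtain ⟨j, hj, hj'⟩ := hN n hn
    rw [h] at hj'; cases hj'; exact hj
  induction hn using Nat.decreasingInduction generalizing q with
  | self =>
    obtain ⟨j, hj, hj'⟩ := hN N le_rfl
    rw [h] at hj'; cases hj'; exact hj
  | of_succ n hn ih =>
    obtain ⟨j, hj, hjq⟩ := NFCseq.coord_succ _ h
    obtain ⟨j', rfl, hj'⟩ := S.pmap_pred hjq
    rw [NFCseq.coord_pred _ (ih hj), hj']

theorem coord_iter (x : S.Xpt) {n q s : ℕ} (h : x.1 n = some q) (hq : q + s < S.hgt n) :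
    (S.T^[s] x).1 n = some (q + s) := by
  induction s with
  | zero => simpa using h
  | succ s ih =>
    rw [Function.iterate_succ_apply']
    exact coord_T _ (ih (by omega)) (by omega)

theorem coord_of_iter (x : S.Xpt) {n q s : ℕ} (h : (S.T^[s] x).1 n = some (q + s)) :
    x.1 n = some q := by
  induction s with
  | zero => simpa using h
  | succ s ih =>
    rw [Function.iterate_succ_apply'] at h
    exact ih (coord_of_T _ h)

theorem Td_iter_apply {d : ℕ} (y : S.Xd d) (s : ℕ) (i : Fin d) :
    ((S.Td d)^[s] y) i = S.T^[s] (y i) := by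
  induction s generalizing y with
  | zero => rfl
  | succ s ih => rw [Function.iterate_succ_apply, ih]; rfl

/-- Inside tower `m'`, the gaps between consecutive occurrences of tower `m` have length at most
`e + 1` and the gap above the last occurrence has length at most `e`, where `e` is the sum of the
numbers `spa r` for `m ≤ r < m'`. -/
theorem exists_return {m m' : ℕ} (hm : m ≤ m') (x : S.Xpt) {j : ℕ} (hj : x.1 m' = some j)
    (hje : j + ∑ r ∈ Finset.Ico m m', S.spa r < S.hgt m') :
    ∃ s ≤ ∑ r ∈ Finset.Ico m m', S.spa r + 1, (S.T^[s] x).1 m ≠ none := by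
  induction m', hm using Nat.le_induction generalizing j with
  | base => exact ⟨0, by omega, by simp [hj]⟩
  | succ m' hm ih =>
    rw [Finset.sum_Ico_succ_top hm] at hje ⊢
    set e := ∑ r ∈ Finset.Ico m m', S.spa r
    have hs := S.hgt_succ m'
    have hx := NFCseq.coord_pred x hj
    -- it suffices to reach the bottom of some occurrence of tower `m'`
    have key : ∀ s ≤ e + S.spa m' + 1, j + s < S.hgt (m' + 1) →
        S.pmap m' (j + s) = some 0 →
        ∃ s ≤ e + S.spa m' + 1, (S.T^[s] x).1 m ≠ none := by
      intro s hse hlt hp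
      refine ⟨s, hse, ?_⟩
      have h0 := NFCseq.coord_pred _ (coord_iter x hj hlt)
      rw [NFCseq.coord_zero_of_le _ hm (h0.trans hp)]
      simp
    have hb2 : S.pmap m' (S.hgt m' + S.spa m') = some 0 := by
      have := S.hgt_pos m'
      unfold NFCseq.pmap; split_ifs <;> first | omega | (rw [Option.some.injEq]; omega)
    have hb3 : S.pmap m' (2 * S.hgt m' + 2 * S.spa m' + 1) = some 0 := by
      have := S.hgt_pos m'
      unfold NFCseq.pmap; split_ifs <;> first | omega | (rw [Option.some.injEq]; omega)
    have go2 : j ≤ S.hgt m' + S.spa m' → S.hgt m' + S.spa m' ≤ j + (e + S.spa m' + 1) →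
        ∃ s ≤ e + S.spa m' + 1, (S.T^[s] x).1 m ≠ none := fun h1 h2 =>
      key (S.hgt m' + S.spa m' - j) (by omega) (by omega)
        (by rw [show j + (S.hgt m' + S.spa m' - j) = S.hgt m' + S.spa m' by omega, hb2])
    have go3 : j ≤ 2 * S.hgt m' + 2 * S.spa m' + 1 →
        2 * S.hgt m' + 2 * S.spa m' + 1 ≤ j + (e + S.spa m' + 1) →
        ∃ s ≤ e + S.spa m' + 1, (S.T^[s] x).1 m ≠ none := fun h1 h2 =>
      key (2 * S.hgt m' + 2 * S.spa m' + 1 - j) (by omega) (by have := S.hgt_pos m'; omega)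
        (by rw [show j + (2 * S.hgt m' + 2 * S.spa m' + 1 - j) =
              2 * S.hgt m' + 2 * S.spa m' + 1 by omega, hb3])
    by_cases hq : ∃ q, S.pmap m' j = some q ∧ q + e < S.hgt m'
    · obtain ⟨q, hq, hqe⟩ := hq
      obtain ⟨s, hs1, hs2⟩ := ih (hx.trans hq) hqe
      exact ⟨s, by omega, hs2⟩
    · push Not at hq
      unfold NFCseq.pmap at hq
      split_ifs at hq with a1 a2 a3 a4 a5
      · exact go2 (by omega) (by have := hq _ rfl; omega)
      · exact go2 (by omega) (by omega)
      · exact go3 (by omega) (by have := hq _ rfl; omega)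
      · exact go3 (by omega) (by omega)
      · have := hq _ rfl; omega
      · omega

end NFC

/-! ### Sums along an orbit -/

/-- Splitting `[0, L)` into runs of `A` cut at the points of `B`: if `f` has average at least `ρ` on
every such run of length at least `τ`, is at least `-K` everywhere and is nonnegative outside `A`,
then each of the at most `1 + #B` short runs costs at most `(ρ + K) τ`. -/
theorem sum_ge_of_runs (f : ℕ → ℝ) (A B : Set ℕ) (ρ K : ℝ) (τ M : ℕ) (hρ : 0 ≤ ρ) (hK : 0 ≤ K)
    (hrun : ∀ a b, a < b → b ≤ M → (∀ s, a ≤ s → s < b → s ∈ A) → (∀ s, a < s → s < b → s ∉ B) →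
      τ ≤ b - a → ρ * ((b - a : ℕ) : ℝ) ≤ ∑ s ∈ Finset.Ico a b, f s)
    (hfK : ∀ s, -K ≤ f s) (hf0 : ∀ s, s ∉ A → 0 ≤ f s)
    (hAB : ∀ s, s ∉ A → s + 1 ∈ A → s + 1 ∈ B) (L : ℕ) (hL : L ≤ M) :
    ρ * ((Finset.range L).filter (· ∈ A)).card -
      (ρ + K) * τ * (1 + ((Finset.range L).filter (· ∈ B)).card) ≤ ∑ s ∈ Finset.range L, f s := by
  have hc : 0 ≤ (ρ + K) * τ := by positivity
  induction L using Nat.strong_induction_on with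
  | _ L ih =>
  obtain _ | L := L
  · simp; linarith
  by_cases hLA : L ∈ A
  · have hex : ∃ a, a ≤ L ∧ (∀ s, a ≤ s → s < L + 1 → s ∈ A) ∧ (∀ s, a < s → s < L + 1 → s ∉ B) :=
      ⟨L, le_rfl, fun s h1 h2 => by rwa [show s = L by omega], fun s h1 h2 => by omega⟩
    obtain ⟨ha, haA, haB⟩ := Nat.find_spec hex
    have hmin := fun b => Nat.find_min (m := b) hex
    set a := Nat.find hex
    have hpiece : ρ * ((L + 1 - a : ℕ) : ℝ) - (ρ + K) * τ ≤ ∑ s ∈ Finset.Ico a (L + 1), f s := by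
      by_cases hτ : τ ≤ L + 1 - a
      · have := hrun a (L + 1) (by omega) hL haA haB hτ
        linarith
      · have h1 : ∑ s ∈ Finset.Ico a (L + 1), (-K) ≤ ∑ s ∈ Finset.Ico a (L + 1), f s :=
          Finset.sum_le_sum fun s _ => hfK s
        rw [Finset.sum_const, Nat.card_Ico, nsmul_eq_mul] at h1
        have h2 : ((L + 1 - a : ℕ) : ℝ) ≤ τ := by exact_mod_cast (by omega)
        nlinarith
    have hcA : (((Finset.range (L + 1)).filter (· ∈ A)).card : ℝ) ≤
        ((Finset.range a).filter (· ∈ A)).card + ((L + 1 - a : ℕ) : ℝ) := by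
      have hsub : (Finset.range (L + 1)).filter (· ∈ A) ⊆
          (Finset.range a).filter (· ∈ A) ∪ Finset.Ico a (L + 1) := by
        intro s hs
        simp only [Finset.mem_filter, Finset.mem_range, Finset.mem_union, Finset.mem_Ico] at hs ⊢
        by_cases hsa : s < a
        · exact Or.inl ⟨hsa, hs.2⟩
        · exact Or.inr ⟨by omega, hs.1⟩
      have := (Finset.card_le_card hsub).trans (Finset.card_union_le _ _)
      rw [Nat.card_Ico] at this
      exact_mod_cast this
    have hsplit : ∑ s ∈ Finset.range (L + 1), f s =
        ∑ s ∈ Finset.range a, f s + ∑ s ∈ Finset.Ico a (L + 1), f s :=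
      (Finset.sum_range_add_sum_Ico f (by omega)).symm
    have hmulA := mul_le_mul_of_nonneg_left hcA hρ
    rcases Nat.eq_zero_or_pos a with h0 | hpos
    · rw [h0] at hsplit hpiece hmulA
      simp only [Finset.range_zero, Finset.filter_empty, Finset.card_empty, Finset.sum_empty]
        at hsplit hmulA
      have : 0 ≤ (ρ + K) * τ * ((Finset.range (L + 1)).filter (· ∈ B)).card := by positivity
      rw [Nat.sub_zero] at hpiece hmulA
      push_cast at hmulA hpiece
      linarith
    · -- a run that does not start at `0` starts at a point of `B`, by minimality of `a`
      have haB' : a ∈ B := by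
        by_contra hnB
        by_cases hpA : a - 1 ∈ A
        · refine hmin (a - 1) (by omega) ⟨by omega, fun s h1 h2 => ?_, fun s h1 h2 => ?_⟩
          · rcases Nat.eq_or_lt_of_le h1 with h | h
            · rwa [← h]
            · exact haA s (by omega) h2
          · rcases Nat.eq_or_lt_of_le (show a ≤ s by omega) with h | h
            · rwa [← h]
            · exact haB s h h2
        · have := hAB (a - 1) hpA
          rw [Nat.sub_add_cancel hpos] at this
          exact hnB (this (haA a le_rfl (by omega)))
      have hcB : (((Finset.range a).filter (· ∈ B)).card : ℝ) + 1 ≤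
          ((Finset.range (L + 1)).filter (· ∈ B)).card := by
        have hsub : insert a ((Finset.range a).filter (· ∈ B)) ⊆
            (Finset.range (L + 1)).filter (· ∈ B) := by
          intro s hs
          simp only [Finset.mem_insert, Finset.mem_filter, Finset.mem_range] at hs ⊢
          rcases hs with rfl | hs
          · exact ⟨by omega, haB'⟩
          · exact ⟨by omega, hs.2⟩
        have := Finset.card_le_card hsub
        rw [Finset.card_insert_of_notMem (by simp)] at this
        exact_mod_cast this
      have hI := ih a (by omega) (by omega)
      have hmulB := mul_le_mul_of_nonneg_left hcB hc
      linarith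
  · have hI := ih L (by omega) (by omega)
    have h1 : (Finset.range (L + 1)).filter (· ∈ A) = (Finset.range L).filter (· ∈ A) := by
      rw [Finset.range_add_one, Finset.filter_insert, if_neg hLA]
    have h2 : (((Finset.range L).filter (· ∈ B)).card : ℝ) ≤
        ((Finset.range (L + 1)).filter (· ∈ B)).card := by
      exact_mod_cast Finset.card_le_card
        (Finset.filter_subset_filter _ (Finset.range_mono (Nat.le_succ L)))
    rw [h1, Finset.sum_range_succ]
    have hmulB := mul_le_mul_of_nonneg_left h2 hc
    have := hf0 L hLA
    linarith

/-- A subset of `[0, L)` whose points are pairwise at distance at least `H` has at most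
`L / H + 1` elements. -/
theorem card_mul_le_of_separated (B : Finset ℕ) (L H : ℕ) (hH : 0 < H) (hBL : ∀ s ∈ B, s < L)
    (hsep : ∀ s ∈ B, ∀ t ∈ B, s < t → s + H ≤ t) : B.card * H ≤ L + H := by
  have h1 : B.card ≤ (Finset.range (L / H + 1)).card := by
    refine Finset.card_le_card_of_injOn (fun s => s / H) (fun s hs => ?_) fun s hs t ht hst => ?_
    · have := Nat.div_le_div_right (c := H) (hBL s hs).le
      simp only [Finset.coe_range, Set.mem_Iio]
      omega
    · have key : ∀ s ∈ B, ∀ t ∈ B, s / H = t / H → ¬ s < t := by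
        intro s hs t ht hst hlt
        have h2 := Nat.div_le_div_right (c := H) (hsep s hs t ht hlt)
        rw [Nat.add_div_right _ hH] at h2
        omega
      have a1 := key s hs t ht hst
      have a2 := key t ht s hs hst.symm
      omega
  rw [Finset.card_range] at h1
  have h2 := Nat.div_mul_le_self L H
  nlinarith

namespace NFC

variable {S : NFC}

/-- Along any orbit segment, the visits to the bottom level of tower `m` are at distance at least
`h_m` from each other, so there are at most `L / h_m + 1` of them. -/
theorem card_bottom_le (m : ℕ) (x : S.Xpt) (L : ℕ) :
    ((Finset.range L).filter fun s => (S.T^[s] x).1 m = some 0).card * S.hgt m ≤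
      L + S.hgt m := by
  refine card_mul_le_of_separated _ L _ (S.hgt_pos m) (fun s hs => ?_) fun s hs t ht hst => ?_
  · exact Finset.mem_range.1 (Finset.mem_filter.1 hs).1
  · have h1 := (Finset.mem_filter.1 hs).2
    have h2 := (Finset.mem_filter.1 ht).2
    by_contra hlt
    have h3 := coord_iter (s := t - s) _ h1 (by omega)
    rw [← Function.iterate_add_apply, Nat.sub_add_cancel hst.le, h2, Option.some_inj] at h3
    omega

/-- Along an orbit segment staying in tower `m'`, each time spent outside tower `m` is followed
within a time at most `∑ spa r + 1` by a visit to the bottom of tower `m` or by the end of the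
segment. -/
theorem card_gap_le {m m' : ℕ} (hm : m ≤ m') (x : S.Xpt) {j L : ℕ} (hj : x.1 m' = some j)
    (hjL : j + L ≤ S.hgt m') :
    ((Finset.range L).filter fun s => (S.T^[s] x).1 m = none).card ≤
      (∑ r ∈ Finset.Ico m m', S.spa r + 1) *
        (((Finset.range L).filter fun s => (S.T^[s] x).1 m = some 0).card + 1) := by
  set g := ∑ r ∈ Finset.Ico m m', S.spa r + 1 with hg
  set B := (Finset.range L).filter fun s => (S.T^[s] x).1 m = some 0
  have hsub : (Finset.range L).filter (fun s => (S.T^[s] x).1 m = none) ⊆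
      B.biUnion (fun b => Finset.Ico (b - g) b) ∪ Finset.Ico (L - g) L := by
    intro s hs
    rw [Finset.mem_filter, Finset.mem_range] at hs
    rw [Finset.mem_union, Finset.mem_Ico, Finset.mem_biUnion]
    by_cases hsL : s + g < L
    · left
      obtain ⟨t, ht, hne⟩ := exists_return hm _ (coord_iter (s := s) x hj (by omega)) (by omega)
      have hex : ∃ t, (S.T^[t] (S.T^[s] x)).1 m ≠ none := ⟨t, hne⟩
      have hle : Nat.find hex ≤ t := Nat.find_min' hex hne
      have hspec := Nat.find_spec hex
      have hmin := fun u => Nat.find_min (m := u) hex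
      set u := Nat.find hex
      rcases hu : u with _ | u'
      · rw [hu] at hspec
        exact absurd hs.2 hspec
      rw [hu] at hspec
      refine ⟨s + (u' + 1), ?_, by rw [Finset.mem_Ico]; omega⟩
      rw [Finset.mem_filter, Finset.mem_range, add_comm, Function.iterate_add_apply]
      refine ⟨by omega, ?_⟩
      obtain ⟨q, hq⟩ := Option.ne_none_iff_exists'.1 hspec
      obtain _ | q := q
      · exact hq
      · rw [Function.iterate_succ_apply'] at hq
        exact absurd (by rw [coord_of_T _ hq]; simp) (hmin u' (by omega))
    · right; omega
  calc _ ≤ _ := Finset.card_le_card hsub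
    _ ≤ (B.biUnion (fun b => Finset.Ico (b - g) b)).card + (Finset.Ico (L - g) L).card :=
      Finset.card_union_le _ _
    _ ≤ B.card * g + g := by
      gcongr
      · exact Finset.card_biUnion_le_card_mul _ _ _ fun b _ => by rw [Nat.card_Ico]; omega
      · rw [Nat.card_Ico]; omega
    _ = _ := by ring

/-! ### Averages of the edge function -/

/-- `F` has average at least `ρ` along every orbit segment of length at least `τ` during which all
the coordinates stay inside a single occurrence of tower `m`. -/
def LongAvg (S : NFC) (d : ℕ) (F : S.Xd d → ℝ) (m τ : ℕ) (ρ : ℝ) : Prop :=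
  ∀ (y : S.Xd d) (L : ℕ), τ ≤ L → (∀ i, ∃ j, (y i).1 m = some j ∧ j + L ≤ S.hgt m) →
    ρ * L ≤ ∑ s ∈ Finset.range L, F ((S.Td d)^[s] y)

/-- Passing from tower `m` to a higher tower `m'` halves the lower bound on the averages, as soon
as the new threshold `τ'` dominates the old one and the gaps between occurrences of tower `m`
inside tower `m'`. -/
theorem LongAvg.step {d : ℕ} (hd : 1 ≤ d) {F : S.Xd d → ℝ} {m m' τ τ' : ℕ} {ρ K : ℝ}
    (hF : S.LongAvg d F m τ ρ) (hm : m ≤ m') (hρ : 0 < ρ) (hK : 0 ≤ K)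
    (hFK : ∀ y, -K ≤ F y) (hF0 : ∀ y, (∃ i, (y i).1 m = none) → 0 ≤ F y)
    (hτ'0 : 0 < τ') (hτ' : τ' ≤ S.hgt m)
    (hgap : 12 * d * (∑ r ∈ Finset.Ico m m', S.spa r + 1) ≤ τ')
    (hthr : 12 * d * (ρ + K) * τ ≤ ρ * τ') :
    S.LongAvg d F m' τ' (ρ / 2) := by
  intro y L hL hy
  set g := ∑ r ∈ Finset.Ico m m', S.spa r + 1
  set z : ℕ → S.Xd d := fun s => (S.Td d)^[s] y with hz
  have hzi : ∀ s i, z s i = S.T^[s] (y i) := fun s i => Td_iter_apply y s i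
  have hzs : ∀ s i, z (s + 1) i = S.T (z s i) := fun s i => by
    rw [hzi, hzi, Function.iterate_succ_apply']
  set A : Set ℕ := {s | ∀ i, (z s i).1 m ≠ none} with hA
  set B : Set ℕ := {s | ∃ i, (z s i).1 m = some 0} with hB
  have main := sum_ge_of_runs (fun s => F (z s)) A B ρ K τ L hρ.le hK ?_ (fun s => hFK _) ?_ ?_ L
    le_rfl
  rotate_left
  · intro a b hab hbL hrA hrB hτ
    have h1 := hF (z a) (b - a) hτ fun i => ?_
    · rw [Finset.sum_Ico_eq_sum_range]
      refine h1.trans_eq (Finset.sum_congr rfl fun s _ => ?_)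
      rw [hz]
      simp only
      rw [← Function.iterate_add_apply, add_comm]
    · obtain ⟨q, hq⟩ := Option.ne_none_iff_exists'.1 (hrA a le_rfl hab i)
      have hmove : ∀ t, a + t < b → (z (a + t) i).1 m = some (q + t) := by
        intro t
        induction t with
        | zero => intro _; simpa using hq
        | succ t iht =>
          intro ht
          obtain ⟨q', hq'⟩ := Option.ne_none_iff_exists'.1 (hrA (a + (t + 1)) (by omega) ht i)
          obtain _ | q' := q'
          · exact absurd ⟨i, hq'⟩ (hrB (a + (t + 1)) (by omega) ht)
          · have h2 := iht (by omega)
            have h3 := hq'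
            rw [← add_assoc, hzs] at h3
            rw [coord_of_T _ h3, Option.some_inj] at h2
            rw [hq', h2, add_assoc]
      have hlt := NFCseq.coord_lt _ (hmove (b - a - 1) (by omega))
      exact ⟨q, hq, by omega⟩
  · intro s hs
    refine hF0 _ ?_
    by_contra hcon
    exact hs fun i hi => hcon ⟨i, hi⟩
  · intro s hs hs1
    obtain ⟨i, hi⟩ : ∃ i, (z s i).1 m = none := by
      by_contra hcon
      exact hs fun i hi => hcon ⟨i, hi⟩
    refine ⟨i, ?_⟩
    obtain ⟨q, hq⟩ := Option.ne_none_iff_exists'.1 (hs1 i)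
    obtain _ | q := q
    · exact hq
    · rw [hzs] at hq
      rw [coord_of_T _ hq] at hi
      exact absurd hi (by simp)
  -- counting visits to the bottom and to the gaps, coordinate by coordinate
  set b : Fin d → ℕ := fun i =>
    ((Finset.range L).filter fun s => (S.T^[s] (y i)).1 m = some 0).card with hb
  set c : Fin d → ℕ := fun i =>
    ((Finset.range L).filter fun s => (S.T^[s] (y i)).1 m = none).card with hc
  have hbi : ∀ i, b i * τ' ≤ 2 * L := by
    intro i
    have h1 : b i * S.hgt m ≤ L + S.hgt m := card_bottom_le m (y i) L
    rcases Nat.eq_zero_or_pos (b i) with h0 | hpos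
    · rw [h0]; omega
    · obtain ⟨k, hk⟩ := Nat.exists_eq_succ_of_ne_zero hpos.ne'
      rw [hk] at h1 ⊢
      have h2 : k * τ' ≤ k * S.hgt m := Nat.mul_le_mul_left k hτ'
      rw [Nat.succ_mul] at h1 ⊢
      omega
  have hci : ∀ i, c i * τ' ≤ 3 * g * L := by
    intro i
    obtain ⟨j, hj, hjL⟩ := hy i
    have h1 : c i ≤ g * (b i + 1) := card_gap_le hm (y i) hj hjL
    calc c i * τ' ≤ g * (b i + 1) * τ' := Nat.mul_le_mul_right _ h1
      _ = g * (b i * τ' + τ') := by ring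
      _ ≤ g * (2 * L + L) := Nat.mul_le_mul_left _ (add_le_add (hbi i) hL)
      _ = _ := by ring
  have hBcard : ((Finset.range L).filter (· ∈ B)).card ≤ ∑ i, b i := by
    refine (Finset.card_le_card (t := Finset.univ.biUnion fun i =>
      (Finset.range L).filter fun s => (S.T^[s] (y i)).1 m = some 0) fun s hs => ?_).trans
      Finset.card_biUnion_le
    obtain ⟨h1, i, hi⟩ := Finset.mem_filter.1 hs
    rw [hzi] at hi
    exact Finset.mem_biUnion.2 ⟨i, Finset.mem_univ i, Finset.mem_filter.2 ⟨h1, hi⟩⟩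
  have hAcard : L ≤ ((Finset.range L).filter (· ∈ A)).card + ∑ i, c i := by
    have h1 : ((Finset.range L).filter (· ∉ A)).card ≤ ∑ i, c i := by
      refine (Finset.card_le_card (t := Finset.univ.biUnion fun i =>
        (Finset.range L).filter fun s => (S.T^[s] (y i)).1 m = none) fun s hs => ?_).trans
        Finset.card_biUnion_le
      obtain ⟨h1, h2⟩ := Finset.mem_filter.1 hs
      obtain ⟨i, hi⟩ : ∃ i, (z s i).1 m = none := by
        by_contra hcon
        exact h2 fun i hi => hcon ⟨i, hi⟩
      rw [hzi] at hi
      exact Finset.mem_biUnion.2 ⟨i, Finset.mem_univ i, Finset.mem_filter.2 ⟨h1, hi⟩⟩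
    have h2 := Finset.card_filter_add_card_filter_not (s := Finset.range L) (· ∈ A)
    rw [Finset.card_range] at h2
    omega
  have hsb : (∑ i, b i) * τ' ≤ d * (2 * L) := by
    rw [Finset.sum_mul]
    simpa using Finset.sum_le_card_nsmul Finset.univ _ _ fun i _ => hbi i
  have hsc : (∑ i, c i) * 4 ≤ L := by
    have h1 : (∑ i, c i) * τ' ≤ d * (3 * g * L) := by
      rw [Finset.sum_mul]
      simpa using Finset.sum_le_card_nsmul Finset.univ _ _ fun i _ => hci i
    refine Nat.le_of_mul_le_mul_right (c := τ') ?_ hτ'0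
    calc (∑ i, c i) * 4 * τ' = 4 * ((∑ i, c i) * τ') := by ring
      _ ≤ 4 * (d * (3 * g * L)) := Nat.mul_le_mul_left _ h1
      _ = L * (12 * d * g) := by ring
      _ ≤ L * τ' := Nat.mul_le_mul_left _ hgap
  have hsb' : (1 + ((Finset.range L).filter (· ∈ B)).card) * τ' ≤ 3 * d * L := by
    have := Nat.mul_le_mul_right τ' hBcard
    nlinarith
  have e1 : (1 + (((Finset.range L).filter (· ∈ B)).card : ℝ)) * τ' ≤ 3 * d * L := by
    exact_mod_cast hsb'
  have e2 : (L : ℝ) ≤ 4 / 3 * ((Finset.range L).filter (· ∈ A)).card := by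
    have : L * 3 ≤ ((Finset.range L).filter (· ∈ A)).card * 4 := by omega
    have : (L : ℝ) * 3 ≤ ((Finset.range L).filter (· ∈ A)).card * 4 := by exact_mod_cast this
    linarith
  have hτ'R : (0 : ℝ) < τ' := by exact_mod_cast hτ'0
  have e3 : (ρ + K) * τ * (1 + (((Finset.range L).filter (· ∈ B)).card : ℝ)) ≤ ρ * L / 4 := by
    refine le_of_mul_le_mul_right ?_ hτ'R
    calc (ρ + K) * τ * (1 + (((Finset.range L).filter (· ∈ B)).card : ℝ)) * τ'
        = (ρ + K) * τ * ((1 + (((Finset.range L).filter (· ∈ B)).card : ℝ)) * τ') := by ring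
      _ ≤ (ρ + K) * τ * (3 * d * L) := by gcongr
      _ = (12 * d * (ρ + K) * τ) * (L / 4) := by ring
      _ ≤ (ρ * τ') * (L / 4) := by gcongr
      _ = _ := by ring
  have e4 := mul_le_mul_of_nonneg_left e2 hρ.le
  have e5 : ρ * ((Finset.range L).filter (· ∈ A)).card -
      (ρ + K) * τ * (1 + ((Finset.range L).filter (· ∈ B)).card) ≤
      ∑ s ∈ Finset.range L, F (z s) := by
    -- the two sides only differ by the decidability instances of the filters
    convert main
  refine le_trans ?_ e5
  linarith

/-- The function `1_{C_n^d} - K 1_{∂C_n^d}`. -/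
def edgeFun (S : NFC) (d n K : ℕ) (y : S.Xd d) : ℝ :=
  (if y ∈ S.towerD d n then 1 else 0) - K * (if y ∈ S.edgeD d n then 1 else 0)

theorem edgeFun_ge {d n K : ℕ} (y : S.Xd d) : -(K : ℝ) ≤ S.edgeFun d n K y := by
  unfold edgeFun
  have : (0 : ℝ) ≤ K := by positivity
  split_ifs <;> linarith

theorem edgeFun_nonneg {d n K m : ℕ} (hnm : n ≤ m) (y : S.Xd d) (hy : ∃ i, (y i).1 m = none) :
    0 ≤ S.edgeFun d n K y := by
  obtain ⟨i, hi⟩ := hy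
  have h1 : y ∉ S.towerD d n := fun h => NFCseq.tower_mono _ hnm (h i) hi
  have h2 : y ∉ S.edgeD d n := fun h => h1 h.1
  simp [edgeFun, h1, h2]

/-- While all the coordinates cross a single occurrence of tower `n`, the edge of `C_n^d` can be
visited only at the first and at the last time. -/
theorem longAvg_base (d n K : ℕ) : S.LongAvg d (S.edgeFun d n K) n (4 * K) (1 / 2) := by
  intro y L hL hy
  have hterm : ∀ s ∈ Finset.range L, (1 : ℝ) - K * (if s = 0 then 1 else 0) -
      K * (if s = L - 1 then 1 else 0) ≤ S.edgeFun d n K ((S.Td d)^[s] y) := by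
    intro s hs
    rw [Finset.mem_range] at hs
    have hC : (S.Td d)^[s] y ∈ S.towerD d n := by
      intro i
      obtain ⟨j, hj, hjL⟩ := hy i
      rw [Td_iter_apply]
      show (S.T^[s] (y i)).1 n ≠ none
      rw [coord_iter _ hj (by omega)]
      simp
    have hE : (S.Td d)^[s] y ∈ S.edgeD d n → s = 0 ∨ s = L - 1 := by
      rintro ⟨-, i, hi⟩
      obtain ⟨j, hj, hjL⟩ := hy i
      simp only [NFCseq.level, Set.mem_ofPred_eq, Td_iter_apply,
        coord_iter (s := s) _ hj (by omega), Option.some_inj] at hi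
      omega
    have hK : (0 : ℝ) ≤ K := by positivity
    unfold edgeFun
    rw [if_pos hC]
    by_cases he : (S.Td d)^[s] y ∈ S.edgeD d n
    · rw [if_pos he]
      rcases hE he with h | h
      · rw [if_pos h]; split_ifs <;> linarith
      · rw [if_pos h]; split_ifs <;> linarith
    · rw [if_neg he]; split_ifs <;> linarith
  refine le_trans ?_ (Finset.sum_le_sum hterm)
  rw [Finset.sum_sub_distrib, Finset.sum_sub_distrib, ← Finset.mul_sum, ← Finset.mul_sum,
    Finset.sum_ite_eq', Finset.sum_ite_eq']
  have hLR : 4 * (K : ℝ) ≤ L := by exact_mod_cast hL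
  have hK : (0 : ℝ) ≤ K := by positivity
  simp only [Finset.sum_const, Finset.card_range, nsmul_eq_mul, mul_one]
  split_ifs <;> linarith

end NFC

namespace NFC

variable {S : NFC}

/-! ### Averages along the scales `n_ℓ` -/

/-- For all large `n`, the function `1_{C_n^d} - K 1_{∂C_n^d}` has positive averages along the long
crossings of every sufficiently high tower `n_p`. At each scale the average is at most halved, which
is harmless since the thresholds `h_{n_{p-1}} / h_{n_p} ≤ 9^{-p}` decrease much faster. -/
theorem exists_longAvg (S : NFC) {d : ℕ} (hd : 1 ≤ d) (K : ℕ) :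
    ∃ n₀, ∀ n, n₀ ≤ n → ∃ l, ∀ q, S.LongAvg d (S.edgeFun d n K) (S.nseq (l + 1 + q))
      (S.hgt (S.nseq (l + q))) (1 / 8 * (1 / 2) ^ q) := by
  obtain ⟨l₀, hl₀⟩ := S.eventually_spa_small (12 * d)
  set l₁ := l₀ + 12 * d * (1 + 8 * K) + 1 with hl₁
  set τ := 12 * d * (1 + 2 * K) * (4 * K) + 12 * d with hτ
  refine ⟨S.nseq l₁ + 1 + τ + 12 * d * (1 + 4 * K) * τ, fun n hn => ?_⟩
  have hex : ∃ l, n ≤ S.nseq l := ⟨n, S.le_nseq n⟩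
  have hspec := Nat.find_spec hex
  have hmin := fun b => Nat.find_min (m := b) hex
  set l := Nat.find hex
  have hl : l₁ < l := by
    by_contra hcon
    have := S.nseq_strictMono.monotone (not_lt.1 hcon)
    omega
  have hl1 : S.nseq (l - 1) < n := not_le.1 (hmin (l - 1) (by omega))
  have hKR : (0 : ℝ) ≤ K := by positivity
  have hhgt : ∀ a, a ≤ S.hgt a := fun a => S.hgt_strictMono.le_apply
  -- all the towers strictly between `n_{p-1}` and `n_p` have isolated spacers only
  have hsum : ∀ p a, S.nseq p < a → ∑ r ∈ Finset.Ico a (S.nseq (p + 1)), S.spa r = 0 := by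
    intro p a ha
    refine Finset.sum_eq_zero fun r hr => ?_
    rw [Finset.mem_Ico] at hr
    exact S.spa_eq_zero (l := p) (by omega) hr.2
  have hsum' : ∀ p, ∑ r ∈ Finset.Ico (S.nseq p) (S.nseq (p + 1)), S.spa r =
      S.spa (S.nseq p) := by
    intro p
    rw [Finset.sum_eq_sum_Ico_succ_bot (S.nseq_strictMono (Nat.lt_succ_self p)),
      hsum p _ (Nat.lt_succ_self _), add_zero]
  have hFK : ∀ y, -(K : ℝ) ≤ S.edgeFun d n K y := edgeFun_ge
  have hnl : ∀ p, n ≤ S.nseq (l + p) := fun p =>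
    hspec.trans (S.nseq_strictMono.monotone (Nat.le_add_right l p))
  -- from tower `n` to tower `n_l`
  have step1 : S.LongAvg d (S.edgeFun d n K) (S.nseq l) τ (1 / 2 / 2) := by
    refine (longAvg_base d n K).step hd hspec (by norm_num) hKR hFK (edgeFun_nonneg le_rfl)
      (by omega) ((hhgt n).trans' (by omega)) ?_ ?_
    · have h := hsum (l - 1) n hl1
      rw [Nat.sub_add_cancel (by omega)] at h
      rw [h, hτ]
      simp
    · rw [hτ]
      push_cast
      have : (0 : ℝ) ≤ d := by positivity
      nlinarith
  -- from tower `n_l` to tower `n_{l+1}`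
  have step2 : S.LongAvg d (S.edgeFun d n K) (S.nseq (l + 1)) (S.hgt (S.nseq l))
      (1 / 2 / 2 / 2) := by
    refine step1.step hd (S.nseq_strictMono (Nat.lt_succ_self l)).le (by norm_num) hKR hFK
      (edgeFun_nonneg hspec) (S.hgt_pos _) le_rfl ?_ ?_
    · rw [hsum']
      exact hl₀ l (by omega)
    · have h1 : 12 * d * (1 + 4 * K) * τ ≤ S.hgt (S.nseq l) :=
        (hhgt (S.nseq l)).trans' (by omega)
      have h2 : 12 * (d : ℝ) * (1 + 4 * K) * τ ≤ S.hgt (S.nseq l) := by exact_mod_cast h1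
      linarith
  refine ⟨l, fun q => ?_⟩
  induction q with
  | zero =>
    have e : (1 / 8 * (1 / 2) ^ 0 : ℝ) = 1 / 2 / 2 / 2 := by norm_num
    rw [e]
    exact step2
  | succ q ih =>
    have hpos : (0 : ℝ) < 1 / 8 * (1 / 2) ^ q := by positivity
    have h := ih.step hd (S.nseq_strictMono (Nat.lt_succ_self (l + 1 + q))).le hpos hKR hFK
      (edgeFun_nonneg (by rw [add_assoc]; exact hnl _)) (S.hgt_pos _) le_rfl
      (by rw [hsum']; exact hl₀ _ (by omega)) ?_
    · have e : (1 / 8 * (1 / 2) ^ (q + 1) : ℝ) = 1 / 8 * (1 / 2) ^ q / 2 := by ring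
      rw [e, show l + (q + 1) = l + 1 + q by omega]
      exact h
    · have h1 : 12 * d * (1 + 8 * K) ≤ 2 ^ l :=
        (Nat.lt_two_pow_self (n := l)).le.trans' (by omega)
      have h2 : 12 * d * (1 + 8 * K * 2 ^ q) ≤ 3 ^ (2 * (l + q + 1)) := by
        have hq : 1 ≤ 2 ^ q := Nat.one_le_two_pow
        calc 12 * d * (1 + 8 * K * 2 ^ q) ≤ 12 * d * (2 ^ q + 8 * K * 2 ^ q) := by gcongr
          _ = 12 * d * (1 + 8 * K) * 2 ^ q := by ring
          _ ≤ 2 ^ l * 2 ^ q := by gcongr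
          _ = 2 ^ (l + q) := by rw [pow_add]
          _ ≤ 3 ^ (l + q) := Nat.pow_le_pow_left (by norm_num) _
          _ ≤ 3 ^ (2 * (l + q + 1)) := Nat.pow_le_pow_right (by norm_num) (by omega)
      have h3 : 12 * d * (1 + 8 * K * 2 ^ q) * S.hgt (S.nseq (l + q)) ≤
          S.hgt (S.nseq (l + 1 + q)) := by
        have hgrow := S.nseq_lt_succ (l + q)
        rw [show l + q + 1 = l + 1 + q by omega] at hgrow h2
        calc _ ≤ 3 ^ (2 * (l + 1 + q)) * S.hgt (S.nseq (l + q)) := Nat.mul_le_mul_right _ h2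
          _ ≤ S.hgt (S.nseq (l + q) + 2 * (l + 1 + q)) := S.three_pow_mul_hgt_le _ _
          _ ≤ _ := S.hgt_strictMono.monotone hgrow.le
      have h4 : 12 * (d : ℝ) * (1 + 8 * K * 2 ^ q) * S.hgt (S.nseq (l + q)) ≤
          S.hgt (S.nseq (l + 1 + q)) := by exact_mod_cast h3
      have h5 : (1 / 8 * (1 / 2) ^ q + K : ℝ) =
          1 / 8 * (1 / 2) ^ q * (1 + 8 * K * 2 ^ q) := by
        have : ((1 / 2 : ℝ)) ^ q * 2 ^ q = 1 := by rw [← mul_pow]; norm_num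
        linear_combination (-(K : ℝ)) * this
      rw [h5]
      calc _ = 1 / 8 * (1 / 2) ^ q *
            (12 * (d : ℝ) * (1 + 8 * K * 2 ^ q) * S.hgt (S.nseq (l + q))) := by ring
        _ ≤ _ := by gcongr

/-! ### Integration -/

/-- The set of points of `C_N^d` all of whose coordinates are at height at least `s` in tower `N`,
and at height at most `h_N - τ + s`. -/
def window (S : NFC) (d N τ s : ℕ) : Set (S.Xd d) :=
  {z | ∀ i, ∃ j, (z i).1 N = some j ∧ s ≤ j ∧ j + τ ≤ S.hgt N + s}

theorem measurableSet_forall_coord (d n : ℕ) (U : Set (Option ℕ)) :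
    MeasurableSet {y : S.Xd d | ∀ i, (y i).1 n ∈ U} := by
  have : {y : S.Xd d | ∀ i, (y i).1 n ∈ U} =
      ⋂ i, (fun y : S.Xd d => y i) ⁻¹' {x | x.1 n ∈ U} := by ext; simp
  rw [this]
  exact MeasurableSet.iInter fun i => measurable_pi_apply i (NFCseq.measurableSet_coord n U)

theorem measurableSet_window (d N τ s : ℕ) : MeasurableSet (S.window d N τ s) :=
  measurableSet_forall_coord d N {o | ∃ j, o = some j ∧ s ≤ j ∧ j + τ ≤ S.hgt N + s}

theorem measurableSet_towerD (d n : ℕ) : MeasurableSet (S.towerD d n) :=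
  measurableSet_forall_coord d n {o | o ≠ none}

theorem measurableSet_edgeD (d n : ℕ) : MeasurableSet (S.edgeD d n) := by
  have : S.edgeD d n = S.towerD d n ∩
      ⋃ i, (fun y : S.Xd d => y i) ⁻¹' {x | x.1 n ∈ ({some 0, some (S.hgt n - 1)} : Set _)} := by
    ext; simp [edgeD, NFCseq.level]
  rw [this]
  exact (measurableSet_towerD d n).inter
    (MeasurableSet.iUnion fun i => measurable_pi_apply i (NFCseq.measurableSet_coord n _))

theorem iter_mem_window {d N τ s : ℕ} (hs : s < τ) (y : S.Xd d) :
    (S.Td d)^[s] y ∈ S.window d N τ s ↔ y ∈ S.window d N τ 0 := by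
  refine forall_congr' fun i => ?_
  rw [Td_iter_apply]
  constructor
  · rintro ⟨j, hj, h1, h2⟩
    obtain ⟨k, rfl⟩ := Nat.exists_eq_add_of_le' h1
    exact ⟨k, coord_of_iter _ hj, by omega, by omega⟩
  · rintro ⟨j, hj, h1, h2⟩
    exact ⟨j + s, coord_iter _ hj (by omega), by omega, by omega⟩

/-- Integrating the nonnegativity of the averages over the starting points of crossings of length
`τ` bounds the part of the edge which is not too close to the boundary of tower `N`. -/
theorem mul_measure_edge_le {d n K N τ : ℕ} {ρ : ℝ} {σ : Measure (S.Xd d)}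
    (hT : MeasurePreserving (S.Td d) σ σ)
    (hF : S.LongAvg d (S.edgeFun d n K) N τ ρ) (hρ : 0 ≤ ρ) (hτ : 0 < τ) :
    K * σ (S.edgeD d n ∩ {z | ∀ i, ∃ j, (z i).1 N = some j ∧ τ ≤ j ∧ j + τ ≤ S.hgt N}) ≤
      σ (S.towerD d n) := by
  set I : Set (S.Xd d) := {z | ∀ i, ∃ j, (z i).1 N = some j ∧ τ ≤ j ∧ j + τ ≤ S.hgt N}
  have hmE : ∀ s, MeasurableSet (S.edgeD d n ∩ S.window d N τ s) := fun s =>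
    (measurableSet_edgeD d n).inter (measurableSet_window d N τ s)
  have hmC : ∀ s, MeasurableSet (S.towerD d n ∩ S.window d N τ s) := fun s =>
    (measurableSet_towerD d n).inter (measurableSet_window d N τ s)
  have hTs : ∀ s, MeasurePreserving ((S.Td d)^[s]) σ σ := fun s => hT.iterate s
  have hpt : ∀ y, ∑ s ∈ Finset.range τ, (K : ℝ≥0∞) *
        (((S.Td d)^[s]) ⁻¹' (S.edgeD d n ∩ S.window d N τ s)).indicator 1 y ≤
      ∑ s ∈ Finset.range τ,
        (((S.Td d)^[s]) ⁻¹' (S.towerD d n ∩ S.window d N τ s)).indicator 1 y := by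
    intro y
    by_cases hy : y ∈ S.window d N τ 0
    · have h1 := hF y τ le_rfl fun i => by
        obtain ⟨j, hj, -, hle⟩ := hy i
        exact ⟨j, hj, hle⟩
      have h2 : (0 : ℝ) ≤ ∑ s ∈ Finset.range τ, S.edgeFun d n K ((S.Td d)^[s] y) :=
        h1.trans' (by positivity)
      unfold edgeFun at h2
      rw [Finset.sum_sub_distrib, sub_nonneg] at h2
      have h3 : ∑ s ∈ Finset.range τ, K * (if (S.Td d)^[s] y ∈ S.edgeD d n then 1 else 0) ≤
          ∑ s ∈ Finset.range τ, (if (S.Td d)^[s] y ∈ S.towerD d n then 1 else 0) := by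
        exact_mod_cast h2
      have h4 : ∑ s ∈ Finset.range τ, (K : ℝ≥0∞) *
            (if (S.Td d)^[s] y ∈ S.edgeD d n then 1 else 0) ≤
          ∑ s ∈ Finset.range τ, (if (S.Td d)^[s] y ∈ S.towerD d n then 1 else 0) := by
        exact_mod_cast h3
      convert h4 using 1
      · refine Finset.sum_congr rfl fun s hs => ?_
        simp [Set.indicator_apply, (iter_mem_window (Finset.mem_range.1 hs) y).2 hy]
      · refine Finset.sum_congr rfl fun s hs => ?_
        simp [Set.indicator_apply, (iter_mem_window (Finset.mem_range.1 hs) y).2 hy]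
    · rw [Finset.sum_eq_zero]
      · exact zero_le
      · intro s hs
        rw [Set.indicator_of_notMem, mul_zero]
        exact fun h => hy ((iter_mem_window (Finset.mem_range.1 hs) y).1 h.2)
  have hint := lintegral_mono (μ := σ) hpt
  have hind : ∀ B : Set (S.Xd d), MeasurableSet B →
      ∀ s, Measurable ((((S.Td d)^[s]) ⁻¹' B).indicator (1 : S.Xd d → ℝ≥0∞)) := fun B hB s =>
    measurable_one.indicator ((hTs s).measurable hB)
  rw [lintegral_finsetSum _ fun s _ => (hind _ (hmE s) s).const_mul _,
    lintegral_finsetSum _ fun s _ => hind _ (hmC s) s] at hint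
  simp only [lintegral_const_mul _ (hind _ (hmE _) _),
    lintegral_indicator_one ((hTs _).measurable (hmE _)),
    lintegral_indicator_one ((hTs _).measurable (hmC _)),
    (hTs _).measure_preimage (hmE _).nullMeasurableSet,
    (hTs _).measure_preimage (hmC _).nullMeasurableSet] at hint
  have hlow : (τ : ℝ≥0∞) * (K * σ (S.edgeD d n ∩ I)) ≤
      ∑ s ∈ Finset.range τ, K * σ (S.edgeD d n ∩ S.window d N τ s) := by
    have e : (τ : ℝ≥0∞) * (K * σ (S.edgeD d n ∩ I)) =
        ∑ _s ∈ Finset.range τ, K * σ (S.edgeD d n ∩ I) := by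
      rw [Finset.sum_const, Finset.card_range, nsmul_eq_mul]
    rw [e]
    refine Finset.sum_le_sum fun s hs => ?_
    rw [Finset.mem_range] at hs
    gcongr
    intro z hz i
    obtain ⟨j, hj, h1, h2⟩ := hz i
    exact ⟨j, hj, by omega, by omega⟩
  have hup : ∑ s ∈ Finset.range τ, σ (S.towerD d n ∩ S.window d N τ s) ≤
      (τ : ℝ≥0∞) * σ (S.towerD d n) := by
    have e : (τ : ℝ≥0∞) * σ (S.towerD d n) = ∑ _s ∈ Finset.range τ, σ (S.towerD d n) := by
      rw [Finset.sum_const, Finset.card_range, nsmul_eq_mul]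
    rw [e]
    exact Finset.sum_le_sum fun s _ => measure_mono Set.inter_subset_left
  exact (ENNReal.mul_le_mul_iff_right (by exact_mod_cast hτ.ne') (ENNReal.natCast_ne_top τ)).1
    (hlow.trans (hint.trans hup))

end NFC

namespace NFCX

variable {S : NFCX}

/-- A point of `X_∞` is eventually far from both ends of the towers `n_p`. -/
theorem exists_margin {x : S.Xpt} (hx : x ∈ S.Xinf) {p : ℕ} (hp1 : S.ellx x ≤ p + 1) :
    ∃ j, x.1 (S.nseq (p + 1)) = some j ∧ S.hgt (S.nseq p) ≤ j ∧
      j + S.hgt (S.nseq p) ≤ S.hgt (S.nseq (p + 1)) := by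
  have hg := S.nseq_lt_succ p
  obtain ⟨h1, h2, h3⟩ := S.Xinf_spec x hx (p + 1) hp1 (S.nseq (p + 1) - (p + 1))
    (by rw [Nat.add_sub_cancel]; omega) (by omega)
  obtain ⟨j, hj, ha, hb⟩ := NFCseq.margin_of_occIdx x (by omega) h1 h2 h3
  have := S.hgt_strictMono.monotone
    (show S.nseq p ≤ S.nseq (p + 1) - (p + 1) by omega)
  exact ⟨j, hj, by omega, by omega⟩

/-- For measures carried by `X_∞^d`, almost every point of the edge is eventually far from the ends
of the towers `n_p`, so the bound on the part of the edge far from the ends extends to the whole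
edge. -/
theorem mul_measure_edge_le {d n K l : ℕ} {σ : Measure (S.toNFC.Xd d)}
    (hT : MeasurePreserving (S.toNFC.Td d) σ σ)
    (hconull : σ {y : S.toNFC.Xd d | ¬ ∀ i, y i ∈ S.Xinf} = 0)
    (hF : ∀ q, S.toNFC.LongAvg d (S.toNFC.edgeFun d n K) (S.nseq (l + 1 + q))
      (S.hgt (S.nseq (l + q))) (1 / 8 * (1 / 2) ^ q)) :
    K * σ (S.toNFC.edgeD d n) ≤ σ (S.toNFC.towerD d n) := by
  set I : ℕ → Set (S.toNFC.Xd d) := fun q => {z | ∀ i, ∃ j, (z i).1 (S.nseq (l + 1 + q)) = some j ∧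
    S.hgt (S.nseq (l + q)) ≤ j ∧ j + S.hgt (S.nseq (l + q)) ≤ S.hgt (S.nseq (l + 1 + q))} with hI
  have hle : ∀ q, K * σ (S.toNFC.edgeD d n ∩ I q) ≤ σ (S.toNFC.towerD d n) := fun q =>
    NFC.mul_measure_edge_le hT (hF q) (by positivity) (S.hgt_pos _)
  set J : ℕ → Set (S.toNFC.Xd d) := fun q => S.toNFC.edgeD d n ∩ ⋂ r, I (q + r) with hJ
  have hJmono : Monotone J := by
    intro a b hab z hz
    refine ⟨hz.1, Set.mem_iInter.2 fun r => ?_⟩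
    have := Set.mem_iInter.1 hz.2 (b - a + r)
    rwa [show a + (b - a + r) = b + r by omega] at this
  have hJle : ∀ q, K * σ (J q) ≤ σ (S.toNFC.towerD d n) := by
    intro q
    refine le_trans ?_ (hle q)
    gcongr
    refine Set.inter_subset_inter_right _ ?_
    exact Set.iInter_subset (fun r => I (q + r)) 0
  have hcover : σ (S.toNFC.edgeD d n) ≤ σ (⋃ q, J q) := by
    refine measure_mono_ae ?_
    have hae : ∀ᵐ y ∂σ, ∀ i, y i ∈ S.Xinf := hconull
    filter_upwards [hae] with y hy hyE
    refine Set.mem_iUnion.2 ⟨∑ i, S.ellx (y i), hyE, Set.mem_iInter.2 fun r i => ?_⟩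
    have h1 : S.ellx (y i) ≤ ∑ i, S.ellx (y i) :=
      Finset.single_le_sum (f := fun i => S.ellx (y i)) (fun _ _ => Nat.zero_le _)
        (Finset.mem_univ i)
    have h2 := exists_margin (hy i) (p := l + (∑ i, S.ellx (y i) + r)) (by omega)
    rw [show l + 1 + (∑ i, S.ellx (y i) + r) = l + (∑ i, S.ellx (y i) + r) + 1 by omega]
    exact h2
  calc K * σ (S.toNFC.edgeD d n) ≤ K * σ (⋃ q, J q) := by gcongr
    _ = ⨆ q, K * σ (J q) := by rw [hJmono.measure_iUnion, ENNReal.mul_iSup]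
    _ ≤ _ := iSup_le hJle

end NFCX


/-- For all large `n`, `σ(C_n^d) > 0` (so that
`δ(n) = σ(∂C_n^d)/σ(C_n^d)` is defined), and `δ(n) → 0` as `n → ∞`. -/
theorem stmt17 (S : NFCX) (d : ℕ) (hd : 2 ≤ d)
    (σ : Measure (S.toNFC.Xd d)) (hσ0 : σ ≠ 0) (hR : S.toNFC.IsRadon d σ)
    (herg : Ergodic (S.toNFC.Td d) σ)
    (hconull : σ {y : S.toNFC.Xd d | ¬ ∀ i, y i ∈ S.Xinf} = 0) :
    (∀ᶠ n in atTop, 0 < σ (S.toNFC.towerD d n)) ∧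
    Tendsto (fun n => σ (S.toNFC.edgeD d n) / σ (S.toNFC.towerD d n)) atTop
      (𝓝 (0 : ℝ≥0∞)) := by
  constructor
  · -- the sets `C_n^d` increase to `X^d`
    have hmono : Monotone (S.toNFC.towerD d) := fun n m hnm y hy i =>
      NFCseq.tower_mono _ hnm (hy i)
    have hU : ⋃ n, S.toNFC.towerD d n = Set.univ := by
      refine Set.eq_univ_of_forall fun y => ?_
      choose N hN using fun i => (y i).2.2
      refine Set.mem_iUnion.2 ⟨∑ i, N i, fun i => NFCseq.tower_mono _ ?_ (hN i)⟩
      exact Finset.single_le_sum (f := N) (fun _ _ => Nat.zero_le _) (Finset.mem_univ i)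
    have hpos : 0 < ⨆ n, σ (S.toNFC.towerD d n) := by
      rw [← hmono.measure_iUnion, hU]
      exact Measure.measure_univ_pos.2 hσ0
    obtain ⟨n, hn⟩ := lt_iSup_iff.1 hpos
    exact eventually_atTop.2 ⟨n, fun m hm => hn.trans_le (measure_mono (hmono hm))⟩
  · rw [ENNReal.tendsto_nhds_zero]
    intro ε hε
    obtain ⟨K, hK⟩ := ENNReal.exists_inv_nat_lt hε.ne'
    have hK0 : (K : ℝ≥0∞) ≠ 0 := by
      intro h
      rw [h, ENNReal.inv_zero] at hK
      exact not_top_lt hK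
    obtain ⟨n₀, hn₀⟩ := S.toNFC.exists_longAvg (d := d) (by omega) K
    refine eventually_atTop.2 ⟨n₀, fun n hn => ?_⟩
    obtain ⟨l, hl⟩ := hn₀ n hn
    have h := NFCX.mul_measure_edge_le herg.toMeasurePreserving hconull hl
    refine le_trans (ENNReal.div_le_of_le_mul ?_) hK.le
    rw [mul_comm, ← div_eq_mul_inv, ENNReal.le_div_iff_mul_le (Or.inl hK0)
      (Or.inl (ENNReal.natCast_ne_top K)), mul_comm]
    exact h
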